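/- For every τ ∈ T_0, writing M_loc τ = Σ_i a_i τ_i with pairwise distinct decorated trees τ_i ∈ T_0^X and coefficients a_i, one has M_loc τ / S(τ) = Σ_i τ_i / S(τ_i); equivalently a_i · S(τ_i) = S(τ) for every i. -/

import Mathlib

noncomputable section
open scoped BigOperators
attribute [local instance] Classical.propDecidable

namespace Flow

/-- Multi-indices in `ℕ^{d+1}`. -/
abbrev Multi (d : ℕ) := Fin (d + 1) → ℕ

/-- `k! = ∏ᵢ (kᵢ)!`. -/
def mfact {d : ℕ} (k : Multi d) : ℕ := ∏ i, (k i).factorial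

/-- multinomial binomial coefficient `binom(k,j) = ∏ᵢ binom(kᵢ,jᵢ)`. -/
def mbinom {d : ℕ} (k j : Multi d) : ℕ := ∏ i, (k i).choose (j i)

/-- `|k|_𝔰` for the parabolic scaling `𝔰 = (λ,1,…,1)`. -/
def sNorm {d : ℕ} (lam : ℝ) (k : Multi d) : ℝ :=
  lam * (k 0 : ℝ) + ∑ i, (if i = (0 : Fin (d + 1)) then 0 else (k i : ℝ))

/-- Planar representatives of decorated rooted trees.  A node carries:
`noise` (the presence of a noise-type edge `Ξ` at this node, i.e. the symbol `ζ_l`),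
`grayNoise` (a grey noise symbol `grayΞ`), a polynomial decoration `X^k`, a marker `Y^𝔳`,
and a list of branches.  A branch is either `Sum.inl ((isPrime, a), t)`,
an integration edge `ℐ_a` (`isPrime = false`) or `ℐ'_a` (`isPrime = true`) with subtree `t`,
or `Sum.inr (a, k)`, a grey integration leaf `grayℐ_a(X^k)`. -/
inductive Tree (d : ℕ) : Type where
  | node (noise grayNoise : Bool) (k : Multi d) (v : Bool)
      (bs : List (((Bool × Multi d) × Tree d) ⊕ (Multi d × Multi d)))

abbrev Branch (d : ℕ) := ((Bool × Multi d) × Tree d) ⊕ (Multi d × Multi d)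

namespace Tree

variable {d : ℕ}

def intB (a : Multi d) (t : Tree d) : Branch d := Sum.inl ((false, a), t)
def intPB (a : Multi d) (t : Tree d) : Branch d := Sum.inl ((true, a), t)
def grayB (a k : Multi d) : Branch d := Sum.inr (a, k)

def atom (l g : Bool) (k : Multi d) (v : Bool) : Tree d := .node l g k v []
/-- `𝟏·Y^𝔳`. -/
def one (v : Bool) : Tree d := atom false false 0 v
/-- `Ξ·Y^𝔳`. -/
def xi (v : Bool) : Tree d := atom true false 0 v
/-- `X^k`. -/
def poly (k : Multi d) : Tree d := atom false false k false
/-- the planted tree `ℐ_a(t)`. -/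
def plantI (a : Multi d) (t : Tree d) : Tree d := .node false false 0 false [intB a t]
/-- the planted tree `ℐ'_a(t)`. -/
def plantIP (a : Multi d) (t : Tree d) : Tree d := .node false false 0 false [intPB a t]
/-- the planted grey tree `grayℐ_a(X^k)`. -/
def plantG (a k : Multi d) : Tree d := .node false false 0 false [grayB a k]

/-- Tree product: identification of the roots, adding the decorations. -/
def mul : Tree d → Tree d → Tree d
  | .node l g k v bs, .node l' g' k' v' bs' =>
      .node (l || l') (g || g') (k + k') (v || v') (bs ++ bs')

/-- `ζ_l Y^𝔳 ∏ᵢ ℐ_{aᵢ}(τᵢ)`. -/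
def mk0 (l : Bool) (v : Bool) (bs : List (Multi d × Tree d)) : Tree d :=
  .node l false 0 v (bs.map fun p => intB p.1 p.2)

/-- `ζ_l X^k Y^𝔳 ∏ᵢ ℐ_{aᵢ}(τᵢ)`. -/
def mkX (l : Bool) (k : Multi d) (v : Bool) (bs : List (Multi d × Tree d)) : Tree d :=
  .node l false k v (bs.map fun p => intB p.1 p.2)

end Tree

namespace Tree
variable {d : ℕ}

/-- Lift of a relation on trees to branches: equality of edge labels plus the
relation on subtrees. -/
def BRel (r : Tree d → Tree d → Prop) : Branch d → Branch d → Prop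
  | Sum.inl ((p, a), t), Sum.inl ((p', a'), t') => p = p' ∧ a = a' ∧ r t t'
  | Sum.inr x, Sum.inr y => x = y
  | _, _ => False

/-- Fuelled version of non-planar equality of decorated trees. -/
def TEquivN : ℕ → Tree d → Tree d → Prop
  | 0, _, _ => False
  | n + 1, .node l g k v bs, .node l' g' k' v' bs' =>
      l = l' ∧ g = g' ∧ k = k' ∧ v = v' ∧
        ∃ e : Fin bs.length ≃ Fin bs'.length,
          ∀ i : Fin bs.length, BRel (TEquivN n) (bs.get i) (bs'.get (e i))

/-- Two planar trees represent the same non-planar decorated tree. -/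
def TEquiv (t t' : Tree d) : Prop := ∃ n, TEquivN n t t'

end Tree

/-- Non-planar decorated trees. -/
abbrev QTree (d : ℕ) := Quot (@Tree.TEquiv d)

/-- The class of a planar representative. -/
def qk {d : ℕ} (t : Tree d) : QTree d := Quot.mk _ t

/-- A choice of planar representative. -/
def qout {d : ℕ} (c : QTree d) : Tree d := (Quot.exists_rep c).choose

namespace Tree

variable {d : ℕ}

/-- Fuelled symmetry factor. -/
def SfacN : ℕ → Tree d → ℕ
  | 0, _ => 1
  | n + 1, .node _ _ k _ bs =>
      mfact k *
        Nat.card {e : Equiv.Perm (Fin bs.length) //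
          ∀ i, BRel TEquiv (bs.get (e i)) (bs.get i)} *
        (bs.map fun b => match b with
          | Sum.inl (_, t) => SfacN n t
          | Sum.inr _ => 1).prod

/-- The symmetry factor `S(τ)`. -/
def Sfac (t : Tree d) : ℕ := SfacN (sizeOf t) t

/-- Fuelled degree. -/
def degN (α lam : ℝ) : ℕ → Tree d → ℝ
  | 0, _ => 0
  | n + 1, .node l _ k _ bs =>
      (if l then α else 0) + sNorm lam k +
        (bs.map fun b => match b with
          | Sum.inl ((p, a), t) => degN α lam n t + (if p then 0 else lam) - sNorm lam a
          | Sum.inr _ => 0).sum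

/-- The degree of a decorated tree (`α` is the regularity of the noise,
`lam` the order `λ` of the operator). -/
def deg (α lam : ℝ) (t : Tree d) : ℝ := degN α lam (sizeOf t) t

/-- Fuelled number of `ℐ'`-edges. -/
def primeCountN : ℕ → Tree d → ℕ
  | 0, _ => 0
  | n + 1, .node _ _ _ _ bs =>
      (bs.map fun b => match b with
        | Sum.inl ((p, _), t) => (if p then 1 else 0) + primeCountN n t
        | Sum.inr _ => 0).sum

def primeCount (t : Tree d) : ℕ := primeCountN (sizeOf t) t

/-- Fuelled shape predicate; the flags allow polynomial decorations, grey
decorations and `ℐ'`-edges respectively. -/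
def ShapeN (aP aG aPr : Bool) : ℕ → Tree d → Prop
  | 0, _ => False
  | n + 1, .node _ g k _ bs =>
      (aG = true ∨ g = false) ∧ (aP = true ∨ k = 0) ∧
        ∀ b ∈ bs,
          (∃ p a t, b = Sum.inl ((p, a), t) ∧ (aPr = true ∨ p = false) ∧
              ShapeN aP aG aPr n t) ∨
            (aG = true ∧ ∃ x, b = Sum.inr x)

def Shape (aP aG aPr : Bool) (t : Tree d) : Prop := ∃ n, ShapeN aP aG aPr n t

/-- `T_0`: only `ℐ`- and `Ξ`-edges, trivial polynomial decorations. -/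
def IsT0 (t : Tree d) : Prop := Shape false false false t
/-- `T_0^X`: polynomial decorations allowed. -/
def IsT0X (t : Tree d) : Prop := Shape true false false t
/-- `T_0^𝔤`: grey decorations allowed. -/
def IsT0g (t : Tree d) : Prop := Shape false true false t
/-- `T_0^{X,𝔤}`. -/
def IsT0Xg (t : Tree d) : Prop := Shape true true false t
/-- `T_1`: at most one `ℐ'`-edge. -/
def IsT1 (t : Tree d) : Prop := Shape false false true t ∧ primeCount t ≤ 1
/-- `T_1^X`. -/
def IsT1X (t : Tree d) : Prop := Shape true false true t ∧ primeCount t ≤ 1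

/-- Fuelled predicate: every node carries the marker `Y^{v₀}`. -/
def VAllN (v0 : Bool) : ℕ → Tree d → Prop
  | 0, _ => False
  | n + 1, .node _ _ _ v bs =>
      v = v0 ∧ ∀ b ∈ bs, ∀ pa t, b = Sum.inl (pa, t) → VAllN v0 n t

def VAll (v0 : Bool) (t : Tree d) : Prop := ∃ n, VAllN v0 n t

/-- Fuelled predicate: all edge decorations are `0`. -/
def Dec0N : ℕ → Tree d → Prop
  | 0, _ => False
  | n + 1, .node _ _ _ _ bs =>
      ∀ b ∈ bs, ∀ pa t, b = Sum.inl (pa, t) → (pa.2 = (0 : Multi d) ∧ Dec0N n t)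

def Dec0 (t : Tree d) : Prop := ∃ n, Dec0N n t

/-- Fuelled predicate: the tree contains a grey symbol. -/
def hasGrayN : ℕ → Tree d → Prop
  | 0, _ => False
  | n + 1, .node _ g _ _ bs =>
      g = true ∨ ∃ b ∈ bs,
        (∃ x, b = Sum.inr x) ∨ (∃ pa t, b = Sum.inl (pa, t) ∧ hasGrayN n t)

def HasGray (t : Tree d) : Prop := ∃ n, hasGrayN n t

/-- Fuelled inverse of the grey decorations (`graydown`): erase `grayΞ`,
transfer the polynomial of each grey edge to the node decoration. -/
def graydownN : ℕ → Tree d → Tree d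
  | 0, t => t
  | n + 1, .node l _ k v bs =>
      .node l false
        (k + (bs.map fun b => match b with
          | Sum.inr (_, kk) => kk
          | _ => 0).sum) v
        (bs.filterMap fun b => match b with
          | Sum.inl ((p, a), t) => some (Sum.inl ((p, a), graydownN n t))
          | Sum.inr _ => none)

def graydown (t : Tree d) : Tree d := graydownN (sizeOf t) t

end Tree

/-! ### Formal linear combinations of decorated trees -/

/-- A (possibly infinite) formal linear combination of non-planar decorated trees. -/
abbrev Ser (d : ℕ) := QTree d → ℝ

/-- A formal linear combination of tensor products of decorated trees. -/
abbrev Ser2 (d : ℕ) := QTree d × QTree d → ℝ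

/-- The basis element given by a planar tree. -/
def dqT {d : ℕ} (t : Tree d) : Ser d := fun x => if x = qk t then 1 else 0

/-- The basis element given by a class. -/
def dqC {d : ℕ} (c : QTree d) : Ser d := fun x => if x = c then 1 else 0

/-- The basis element `s ⊗ t`. -/
def dq2 {d : ℕ} (s t : Tree d) : Ser2 d := fun x => if x = (qk s, qk t) then 1 else 0

/-- Linear extension of a tree-indexed family of series to series. -/
def extT {d : ℕ} (F : QTree d → Ser d) (S : Ser d) : Ser d :=
  fun x => ∑ᶠ c : QTree d, S c * F c x

/-- Linear extension, with values in tensors. -/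
def extS2 {d : ℕ} (F : QTree d → Ser2 d) (S : Ser d) : Ser2 d :=
  fun x => ∑ᶠ c : QTree d, S c * F c x

/-- Apply linear maps in each tensor slot. -/
def ap2 {d : ℕ} (F G : QTree d → Ser d) (S : Ser2 d) : Ser2 d :=
  fun x => ∑ᶠ p : QTree d × QTree d, S p * F p.1 x.1 * G p.2 x.2

/-- `(id ⊗ f)` for a map `f` on planar trees. -/
def mapSnd {d : ℕ} (f : Tree d → Tree d) (S : Ser2 d) : Ser2 d :=
  fun x => ∑ᶠ p : QTree d × QTree d,
    S p * (if x.1 = p.1 ∧ x.2 = qk (f (qout p.2)) then 1 else 0)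

/-- `(f ⊗ id)` for a map `f` on planar trees. -/
def mapFst {d : ℕ} (f : Tree d → Tree d) (S : Ser2 d) : Ser2 d :=
  fun x => ∑ᶠ p : QTree d × QTree d,
    S p * (if x.2 = p.2 ∧ x.1 = qk (f (qout p.1)) then 1 else 0)

/-- `(f ⊗ id)` killing the trees containing grey symbols (the convention
`ℐ_a(τ) = 0` for `τ` containing a grey symbol). -/
def mapFstKill {d : ℕ} (f : Tree d → Tree d) (S : Ser2 d) : Ser2 d :=
  fun x => ∑ᶠ p : QTree d × QTree d,
    S p * (if ¬ Tree.HasGray (qout p.1) ∧ x.2 = p.2 ∧ x.1 = qk (f (qout p.1)) then 1 else 0)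

/-- Product of series (bilinear extension of the tree product). -/
def mulS {d : ℕ} (A B : Ser d) : Ser d :=
  fun x => ∑ᶠ p : QTree d × QTree d,
    A p.1 * B p.2 * (if x = qk (Tree.mul (qout p.1) (qout p.2)) then 1 else 0)

/-- Product of tensor series. -/
def mul2 {d : ℕ} (A B : Ser2 d) : Ser2 d :=
  fun x => ∑ᶠ p : (QTree d × QTree d) × (QTree d × QTree d),
    A p.1 * B p.2 *
      (if x.1 = qk (Tree.mul (qout p.1.1) (qout p.2.1)) ∧
          x.2 = qk (Tree.mul (qout p.1.2) (qout p.2.2)) then 1 else 0)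

/-- A branch specification: a concrete grey leaf, or an edge whose subtree is a series. -/
inductive BSpec (d : ℕ) where
  | ser (isP : Bool) (a : Multi d) (S : Ser d)
  | gray (a k : Multi d)

def BSpec.coeff {d : ℕ} : BSpec d → QTree d → ℝ
  | .ser _ _ S, c => S c
  | .gray _ _, c => if c = qk (Tree.one false) then 1 else 0

def BSpec.toBranch {d : ℕ} : BSpec d → QTree d → Branch d
  | .ser p a _, c => Sum.inl ((p, a), qout c)
  | .gray a k, _ => Tree.grayB a k

/-- The tree `node(l,g,k,v; branches)` where the subtree of each (non-grey)
branch is drawn from a series; this is the multilinear extension of the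
node-building operation to series. -/
def nodeSer {d : ℕ} (l g : Bool) (k : Multi d) (v : Bool) (specs : List (BSpec d)) : Ser d :=
  fun x => ∑ᶠ cs : List (QTree d),
    if cs.length = specs.length then
      (List.zipWith BSpec.coeff specs cs).prod *
        dqT (Tree.node l g k v (List.zipWith BSpec.toBranch specs cs)) x
    else 0

/-- Branch specifications of a list of (decoration, subtree) pairs. -/
def specsOf {d : ℕ} (bs : List (Multi d × Tree d)) : List (BSpec d) :=
  bs.map fun p => BSpec.ser false p.1 (dqT p.2)

/-- Branch specifications of a list of branches. -/
def specsOfB {d : ℕ} (bs : List (Branch d)) : List (BSpec d) :=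
  bs.map fun b => match b with
    | Sum.inl ((p, a), t) => BSpec.ser p a (dqT t)
    | Sum.inr ak => BSpec.gray ak.1 ak.2

/-- The symmetry-factor pairing `⟨σ,τ⟩ = S(τ) 𝟙_{σ=τ}`, extended bilinearly. -/
def pairS {d : ℕ} (A B : Ser d) : ℝ :=
  ∑ᶠ c : QTree d, A c * B c * (Tree.Sfac (qout c) : ℝ)

/-- The pairing on tensors, `⟨σ₁⊗σ₂, τ₁⊗τ₂⟩ = ⟨σ₁,τ₁⟩⟨σ₂,τ₂⟩`. -/
def pair2 {d : ℕ} (A B : Ser2 d) : ℝ :=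
  ∑ᶠ p : QTree d × QTree d,
    A p * B p * (Tree.Sfac (qout p.1) : ℝ) * (Tree.Sfac (qout p.2) : ℝ)

/-- Symmetry factor of a class. -/
def SQ {d : ℕ} (c : QTree d) : ℕ := Tree.Sfac (qout c)

/-- Degree of a class. -/
def degQ {d : ℕ} (α lam : ℝ) (c : QTree d) : ℝ := Tree.deg α lam (qout c)

def IsT0Q {d : ℕ} (c : QTree d) : Prop := ∃ t, qk t = c ∧ Tree.IsT0 t
/-- classes of trees in `T_0^*` (marker `𝔳 = 1` everywhere). -/
def IsT0starQ {d : ℕ} (c : QTree d) : Prop := ∃ t, qk t = c ∧ Tree.IsT0 t ∧ Tree.VAll true t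
/-- classes of trees in `T_0^{X,*}`. -/
def IsT0XstarQ {d : ℕ} (c : QTree d) : Prop := ∃ t, qk t = c ∧ Tree.IsT0X t ∧ Tree.VAll true t


/-! ### Defining equations of the maps on decorated trees -/

/-- Defining recursion of the localisation map `M_loc`:
`M_loc (ζ_l Y^𝔳 ∏ᵢ ℐ_{aᵢ}(τᵢ) ∏ⱼ grayℐ_{bⱼ}(X^{kⱼ}))
  = Σ_k (X^k/k!) ζ_l Y^𝔳 ∏ᵢ ℐ_{aᵢ}(M_loc τᵢ) ∏ⱼ grayℐ_{bⱼ}(X^{kⱼ})`. -/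
def MlocEqs {d : ℕ} (Mloc : QTree d → Ser d) : Prop :=
  ∀ (l g : Bool) (v : Bool) (bs : List (Branch d)),
    Tree.IsT0g (Tree.node l g 0 v bs) →
    Mloc (qk (Tree.node l g 0 v bs)) = fun x =>
      ∑ᶠ k : Multi d, (1 / (mfact k : ℝ)) *
        nodeSer l g k v (bs.map fun b => match b with
          | Sum.inl ((p, a), t) => BSpec.ser p a (Mloc (qk t))
          | Sum.inr ak => BSpec.gray ak.1 ak.2) x

/-- Defining recursion of the abstract derivative `↑_μ`:
it vanishes on trees with no edge and
`↑_μ (ζ_l Y^𝔳 ∏ᵢ ℐ_{aᵢ}(τᵢ)) = ζ_l Y^𝔳 Σᵢ (ℐ'_{aᵢ}(τᵢ) + ℐ_{aᵢ}(↑_μ τᵢ)) ∏_{j≠i} ℐ_{aⱼ}(τⱼ)`. -/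
def UpEqs {d : ℕ} (up : QTree d → Ser d) : Prop :=
  ∀ (l : Bool) (v : Bool) (bs : List (Multi d × Tree d)), (∀ p ∈ bs, Tree.IsT0 p.2) →
    up (qk (Tree.mk0 l v bs)) =
      (∑ i : Fin bs.length,
        dqT (Tree.node l false 0 v
          ((bs.map fun p => Tree.intB p.1 p.2).set i.1
            (Tree.intPB (bs.get i).1 (bs.get i).2)))) +
      ∑ i : Fin bs.length,
        nodeSer l false 0 v
          ((specsOf bs).set i.1 (BSpec.ser false (bs.get i).1 (up (qk (bs.get i).2))))

/-- Defining recursion of the grafting operator `↷_a` (grafting with an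
`ℐ'_a`-edge on the nodes with marker `𝔳 = 1`; grafting at the root switches the
marker of the root to `0`). -/
def GraftEqs {d : ℕ} (graft : Multi d → QTree d → QTree d → Ser d) : Prop :=
  ∀ (a : Multi d) (σ : Tree d), Tree.IsT0 σ →
    ∀ (l : Bool) (bs : List (Multi d × Tree d)), (∀ p ∈ bs, Tree.IsT0 p.2) →
      (graft a (qk σ) (qk (Tree.mk0 l true bs)) =
        dqT (Tree.node l false 0 false
          (Tree.intPB a σ :: bs.map fun p => Tree.intB p.1 p.2)) +
        ∑ i : Fin bs.length,
          nodeSer l false 0 true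
            ((specsOf bs).set i.1
              (BSpec.ser false (bs.get i).1 (graft a (qk σ) (qk (bs.get i).2))))) ∧
      (graft a (qk σ) (qk (Tree.mk0 l false bs)) =
        ∑ i : Fin bs.length,
          nodeSer l false 0 false
            ((specsOf bs).set i.1
              (BSpec.ser false (bs.get i).1 (graft a (qk σ) (qk (bs.get i).2)))))

/-- Defining equations of the grafting at the root only, `↷_a^{root}`. -/
def GraftRootEqs {d : ℕ} (graftR : Multi d → QTree d → QTree d → Ser d) : Prop :=
  ∀ (a : Multi d) (σ : Tree d) (l : Bool) (v : Bool) (bs : List (Multi d × Tree d)),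
    graftR a (qk σ) (qk (Tree.mk0 l v bs)) =
      if v then
        dqT (Tree.node l false 0 false
          (Tree.intPB a σ :: bs.map fun p => Tree.intB p.1 p.2))
      else 0

/-- Defining recursion of the grey grafting `gray↷_a` on `𝒯_0^X`. -/
def GAEqs {d : ℕ} (GA : Multi d → QTree d → Ser d) : Prop :=
  ∀ (a : Multi d) (l : Bool) (k : Multi d) (v : Bool) (bs : List (Multi d × Tree d)),
    (∀ p ∈ bs, Tree.IsT0X p.2) →
    GA a (qk (Tree.mkX l k v bs)) =
      (fun x => (if v = true then (1 : ℝ) else 0) *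
        ∑ᶠ j : Multi d, if j ≤ a then
          (mbinom k j : ℝ) *
            dqT (Tree.node l false (k - j) v
              (Tree.grayB (a - j) j :: bs.map fun p => Tree.intB p.1 p.2)) x
        else 0) +
      ∑ i : Fin bs.length,
        nodeSer l false k v
          ((specsOf bs).set i.1 (BSpec.ser false (bs.get i).1 (GA a (qk (bs.get i).2))))

/-- Defining recursion of the grey grafting `gray↷_{a,k}` on `𝒯_0^𝔤`. -/
def GAKEqs {d : ℕ} (GAK : Multi d → Multi d → QTree d → Ser d) : Prop :=
  ∀ (a k0 : Multi d) (l g : Bool) (v : Bool) (bs : List (Branch d)),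
    Tree.IsT0g (Tree.node l g 0 v bs) →
    GAK a k0 (qk (Tree.node l g 0 v bs)) =
      (fun x => (if v = true then (1 : ℝ) else 0) *
        dqT (Tree.node l g 0 v (Tree.grayB a k0 :: bs)) x) +
      ∑ i : Fin bs.length,
        (match bs.get i with
          | Sum.inl ((false, ai), ti) =>
              nodeSer l g 0 v ((specsOfB bs).set i.1
                (BSpec.ser false ai (GAK a k0 (qk ti))))
          | _ => 0)

/-- Defining recursion of the coproduct `Δ_a`, dual to `↷_a`. -/
def DaEqs {d : ℕ} (Da : Multi d → QTree d → Ser2 d) : Prop :=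
  ∀ a : Multi d,
    (Da a (qk (Tree.one false)) = dq2 (Tree.one false) (Tree.one false)) ∧
    (Da a (qk (Tree.xi false)) = dq2 (Tree.xi false) (Tree.one true)) ∧
    (∀ (b : Multi d) (t : Tree d), Tree.IsT0 t →
      Da a (qk (Tree.plantIP b t)) =
        mapSnd (Tree.plantI b) (Da a (qk t)) +
          (if a = b then dq2 t (Tree.one true) else 0)) ∧
    (∀ (b : Multi d) (t : Tree d), Tree.IsT0 t →
      Da a (qk (Tree.plantI b t)) = mapSnd (Tree.plantI b) (Da a (qk t))) ∧
    (∀ s t : Tree d, Tree.IsT1 s → Tree.IsT1 t → Tree.VAll false s → Tree.VAll false t →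
      Da a (qk (Tree.mul s t)) =
        mul2 (Da a (qk s)) (dq2 (Tree.one false) t) +
          mul2 (dq2 (Tree.one false) s) (Da a (qk t)))

/-- Defining recursion of the elementary-cuts coproduct `Δ_1`. -/
def D1Eqs {d : ℕ} (D1 : QTree d → Ser2 d) : Prop :=
  (D1 (qk (Tree.one false)) = dq2 (Tree.one false) (Tree.one false)) ∧
  (D1 (qk (Tree.xi false)) = dq2 (Tree.xi false) (Tree.one true)) ∧
  (∀ (a : Multi d) (t : Tree d), Tree.IsT0 t →
    D1 (qk (Tree.plantI a t)) =
      mapSnd (Tree.plantI a) (D1 (qk t)) + dq2 (Tree.plantIP a t) (Tree.one true)) ∧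
  (∀ s t : Tree d, Tree.IsT0 s → Tree.IsT0 t → Tree.VAll false s → Tree.VAll false t →
    D1 (qk (Tree.mul s t)) =
      mul2 (D1 (qk s)) (dq2 (Tree.one false) t) +
        mul2 (dq2 (Tree.one false) s) (D1 (qk t)))

/-- Defining recursion of the extraction-at-the-root coproduct `Δ_r`. -/
def DrEqs {d : ℕ} (Dr : QTree d → Ser2 d) : Prop :=
  (∀ v : Bool, Dr (qk (Tree.one v)) = dq2 (Tree.one v) (Tree.one false)) ∧
  (Dr (qk (Tree.xi false)) =
    dq2 (Tree.atom false true 0 false) (Tree.xi false) + dq2 (Tree.xi false) (Tree.one false)) ∧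
  (∀ i : Fin (d + 1),
    Dr (qk (Tree.poly (Pi.single i 1))) =
      dq2 (Tree.one false) (Tree.poly (Pi.single i 1)) +
        dq2 (Tree.poly (Pi.single i 1)) (Tree.one false)) ∧
  (∀ (a : Multi d) (t : Tree d), Tree.IsT0X t →
    Dr (qk (Tree.plantI a t)) =
      mapFstKill (Tree.plantI a) (Dr (qk t)) +
        fun x => ∑ᶠ k : Multi d,
          (1 / (mfact k : ℝ)) * dq2 (Tree.plantG a k) (Tree.plantI (a + k) t) x) ∧
  (∀ (a : Multi d) (t : Tree d), Tree.IsT0X t →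
    Dr (qk (Tree.plantIP a t)) = fun x =>
      ∑ᶠ k : Multi d,
        (1 / (mfact k : ℝ)) * dq2 (Tree.plantG a k) (Tree.plantIP (a + k) t) x) ∧
  (∀ s t : Tree d, Tree.IsT1X s → Tree.IsT1X t →
    Dr (qk (Tree.mul s t)) = mul2 (Dr (qk s)) (Dr (qk t)))

/-- Defining recursion of the map `⇑` (summing over all edge decorations). -/
def Up2Eqs {d : ℕ} (Up2 : QTree d → Ser d) : Prop :=
  (∀ (l : Bool) (v : Bool), Up2 (qk (Tree.atom l false 0 v)) = dqT (Tree.atom l false 0 v)) ∧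
  (∀ t : Tree d, Tree.IsT1 t → Tree.Dec0 t →
    (Up2 (qk (Tree.plantI 0 t)) = fun x =>
      ∑ᶠ a : Multi d, nodeSer false false 0 false [BSpec.ser false a (Up2 (qk t))] x) ∧
    (Up2 (qk (Tree.plantIP 0 t)) = fun x =>
      ∑ᶠ a : Multi d, nodeSer false false 0 false [BSpec.ser true a (Up2 (qk t))] x)) ∧
  (∀ s t : Tree d, Tree.IsT1 s → Tree.IsT1 t → Tree.Dec0 s → Tree.Dec0 t →
    Up2 (qk (Tree.mul s t)) = mulS (Up2 (qk s)) (Up2 (qk t)))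


namespace Tree
variable {d : ℕ}

/-- Fuelled list of the planar trees `↑_μ^e τ`, for `e` ranging over the
`ℐ`-edges of `τ`: the type of the edge `e` is switched from `ℐ` to `ℐ'`. -/
def switchesN : ℕ → Tree d → List (Tree d)
  | 0, _ => []
  | n + 1, .node l g k v bs =>
      (List.finRange bs.length).flatMap fun i =>
        match bs.get i with
        | Sum.inl ((false, a), t) =>
            Tree.node l g k v (bs.set i.1 (intPB a t)) ::
              (switchesN n t).map fun t' => Tree.node l g k v (bs.set i.1 (intB a t'))
        | _ => []

/-- The list of the planar trees `↑_μ^e τ`, `e ∈ E_τ` an `ℐ`-edge of `τ`. -/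
def switches (t : Tree d) : List (Tree d) := switchesN (sizeOf t) t

end Tree

/-- The insertion product `ℐ'_a(σ) ↷ τ = σ ↷_a τ` (vanishing on anything that
is not a planted tree `ℐ'_a(σ)`), as a pairing of the two components of a tensor. -/
def insApply {d : ℕ} (graft : Multi d → QTree d → QTree d → Ser d)
    (c₁ c₂ : QTree d) : Ser d :=
  match qout c₁ with
  | .node false false k false [Sum.inl ((true, a), σ)] =>
      if k = 0 then graft a (qk σ) c₂ else 0
  | _ => 0

/-- The insertion product applied to a tensor series. -/
def insProd {d : ℕ} (graft : Multi d → QTree d → QTree d → Ser d)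
    (S : Ser2 d) : Ser d :=
  fun x => ∑ᶠ p : QTree d × QTree d, S p * insApply graft p.1 p.2 x

/-- Recognise the class of a planted tree `ℐ_0(σ)` and return the class of `σ`. -/
def strip0 {d : ℕ} (c : QTree d) : Option (QTree d) :=
  match qout c with
  | .node false false k false [Sum.inl ((false, a), σ)] =>
      if k = 0 ∧ a = 0 then some (qk σ) else none
  | _ => none


namespace Tree
variable {d : ℕ}
/-- Decorations of the `ℐ`/`ℐ'`-edges at the root. -/
def intDecs (bs : List (Branch d)) : List (Multi d) :=
  bs.filterMap fun b => match b with
    | Sum.inl ((_, a), _) => some a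
    | Sum.inr _ => none
/-- Decorations of the grey edges at the root. -/
def grayDecs (bs : List (Branch d)) : List (Multi d) :=
  bs.filterMap fun b => match b with
    | Sum.inr (a, _) => some a
    | Sum.inl _ => none
/-- Subtrees of the `ℐ`/`ℐ'`-edges at the root. -/
def intSubs (bs : List (Branch d)) : List (Tree d) :=
  bs.filterMap fun b => match b with
    | Sum.inl (_, t) => some t
    | Sum.inr _ => none
end Tree

end Flow


namespace Flow

open _root_.Flow.Tree

section aux
variable {d : ℕ}

theorem BRel.mono' {r s : Tree d → Tree d → Prop} (h : ∀ t t', r t t' → s t t') :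
    ∀ b b' : Branch d, BRel r b b' → BRel s b b'
  | Sum.inl ((_, _), _), Sum.inl ((_, _), _), hb => ⟨hb.1, hb.2.1, h _ _ hb.2.2⟩
  | Sum.inr _, Sum.inr _, hb => hb
  | Sum.inl _, Sum.inr _, hb => hb.elim
  | Sum.inr _, Sum.inl _, hb => hb.elim

theorem TEquivN.succ : ∀ (n : ℕ) (t t' : Tree d), TEquivN n t t' → TEquivN (n+1) t t'
  | 0, _, _, h => h.elim
  | n+1, .node _ _ _ _ _, .node _ _ _ _ _, ⟨h1, h2, h3, h4, e, he⟩ =>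
    ⟨h1, h2, h3, h4, e, fun i => BRel.mono' (TEquivN.succ n) _ _ (he i)⟩

theorem TEquivN.mono {n m : ℕ} (hnm : n ≤ m) {t t' : Tree d} (h : TEquivN n t t') :
    TEquivN m t t' := by
  induction hnm with
  | refl => exact h
  | step _ ih => exact TEquivN.succ _ _ _ ih

theorem BRel.exists_fuel : ∀ b b' : Branch d, BRel TEquiv b b' → ∃ n, BRel (TEquivN n) b b'
  | Sum.inl ((_, _), _), Sum.inl ((_, _), _), ⟨h1, h2, n, h3⟩ => ⟨n, h1, h2, h3⟩
  | Sum.inr _, Sum.inr _, hb => ⟨0, hb⟩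
  | Sum.inl _, Sum.inr _, hb => hb.elim
  | Sum.inr _, Sum.inl _, hb => hb.elim

theorem TEquiv_node {l g : Bool} {k : Multi d} {v : Bool} {bs : List (Branch d)}
    {l' g' : Bool} {k' : Multi d} {v' : Bool} {bs' : List (Branch d)} :
    TEquiv (.node l g k v bs) (.node l' g' k' v' bs') ↔
      l = l' ∧ g = g' ∧ k = k' ∧ v = v' ∧
        ∃ e : Fin bs.length ≃ Fin bs'.length,
          ∀ i : Fin bs.length, BRel TEquiv (bs.get i) (bs'.get (e i)) := by
  constructor
  · rintro ⟨n, hn⟩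
    cases n with
    | zero => exact hn.elim
    | succ n =>
      obtain ⟨h1, h2, h3, h4, e, he⟩ := hn
      exact ⟨h1, h2, h3, h4, e, fun i => BRel.mono' (fun _ _ h => ⟨n, h⟩) _ _ (he i)⟩
  · rintro ⟨h1, h2, h3, h4, e, he⟩
    choose f hf using fun i => BRel.exists_fuel _ _ (he i)
    refine ⟨Finset.univ.sup f + 1, h1, h2, h3, h4, e, fun i => ?_⟩
    exact BRel.mono' (fun _ _ h => TEquivN.mono (Finset.le_sup (Finset.mem_univ i)) h) _ _ (hf i)

theorem sizeOf_sub {l g : Bool} {k : Multi d} {v : Bool} {bs : List (Branch d)}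
    {pa : Bool × Multi d} {t : Tree d} (h : Sum.inl (pa, t) ∈ bs) :
    sizeOf t < sizeOf (Tree.node l g k v bs) := by
  have := List.sizeOf_lt_of_mem h
  simp only [Sum.inl.sizeOf_spec, Prod.mk.sizeOf_spec] at this
  simp only [Tree.node.sizeOf_spec]
  omega

theorem TEquiv.refl' : ∀ (n : ℕ) (t : Tree d), sizeOf t ≤ n → TEquiv t t := by
  intro n
  induction n with
  | zero => rintro ⟨l, g, k, v, bs⟩ h; simp at h
  | succ n ih =>
    rintro ⟨l, g, k, v, bs⟩ h
    refine TEquiv_node.2 ⟨rfl, rfl, rfl, rfl, Equiv.refl _, fun i => ?_⟩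
    have hm : bs.get i ∈ bs := List.get_mem _ _
    simp only [Equiv.refl_apply]
    revert hm
    rcases bs.get i with ⟨⟨p, a⟩, t⟩ | x
    · intro hm
      have := sizeOf_sub (l := l) (g := g) (k := k) (v := v) hm
      exact ⟨rfl, rfl, ih t (by omega)⟩
    · intro _; exact rfl

theorem BRel.symm' {r : Tree d → Tree d → Prop} (h : ∀ t t', r t t' → r t' t) :
    ∀ b b' : Branch d, BRel r b b' → BRel r b' b
  | Sum.inl ((_, _), _), Sum.inl ((_, _), _), hb => ⟨hb.1.symm, hb.2.1.symm, h _ _ hb.2.2⟩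
  | Sum.inr _, Sum.inr _, hb => Eq.symm hb
  | Sum.inl _, Sum.inr _, hb => hb.elim
  | Sum.inr _, Sum.inl _, hb => hb.elim

theorem BRel.trans' {r : Tree d → Tree d → Prop} (h : ∀ t t' t'', r t t' → r t' t'' → r t t'') :
    ∀ b b' b'' : Branch d, BRel r b b' → BRel r b' b'' → BRel r b b''
  | Sum.inl ((_, _), _), Sum.inl ((_, _), _), Sum.inl ((_, _), _), hb, hc =>
    ⟨hb.1.trans hc.1, hb.2.1.trans hc.2.1, h _ _ _ hb.2.2 hc.2.2⟩
  | Sum.inr _, Sum.inr _, Sum.inr _, hb, hc => Eq.trans hb hc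
  | Sum.inl _, Sum.inr _, _, hb, _ => hb.elim
  | Sum.inr _, Sum.inl _, _, hb, _ => hb.elim
  | Sum.inl _, Sum.inl _, Sum.inr _, _, hb => hb.elim
  | Sum.inr _, Sum.inr _, Sum.inl _, _, hb => hb.elim

theorem TEquivN.symm : ∀ (n : ℕ) (t t' : Tree d), TEquivN n t t' → TEquivN n t' t
  | 0, _, _, h => h.elim
  | n+1, .node _ _ _ _ _, .node _ _ _ _ _, ⟨h1, h2, h3, h4, e, he⟩ =>
    ⟨h1.symm, h2.symm, h3.symm, h4.symm, e.symm, fun i =>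
      BRel.symm' (TEquivN.symm n) _ _ (by simpa using he (e.symm i))⟩

theorem TEquivN.trans : ∀ (n : ℕ) (t t' t'' : Tree d),
    TEquivN n t t' → TEquivN n t' t'' → TEquivN n t t''
  | 0, _, _, _, h, _ => h.elim
  | n+1, .node _ _ _ _ _, .node _ _ _ _ _, .node _ _ _ _ _, ⟨h1, h2, h3, h4, e, he⟩,
      ⟨h1', h2', h3', h4', e', he'⟩ =>
    ⟨h1.trans h1', h2.trans h2', h3.trans h3', h4.trans h4', e.trans e', fun i =>
      BRel.trans' (TEquivN.trans n) _ _ _ (he i) (he' (e i))⟩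

theorem TEquiv_equivalence : Equivalence (@TEquiv d) where
  refl t := TEquiv.refl' _ t le_rfl
  symm := fun ⟨n, h⟩ => ⟨n, TEquivN.symm _ _ _ h⟩
  trans := fun ⟨n, h⟩ ⟨m, h'⟩ => ⟨max n m, TEquivN.trans _ _ _ _
    (TEquivN.mono (le_max_left _ _) h) (TEquivN.mono (le_max_right _ _) h')⟩

theorem qk_eq {t t' : Tree d} : qk t = qk t' ↔ TEquiv t t' := by
  unfold qk
  rw [Quot.eq, TEquiv_equivalence.eqvGen_iff]

theorem qk_qout (c : QTree d) : qk (qout c) = c := (Quot.exists_rep c).choose_spec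

/-- branch classes -/
def qB : Branch d → ((Bool × Multi d) × QTree d) ⊕ (Multi d × Multi d)
  | Sum.inl (pa, t) => Sum.inl (pa, qk t)
  | Sum.inr x => Sum.inr x

theorem BRel_iff : ∀ b b' : Branch d, BRel TEquiv b b' ↔ qB b = qB b'
  | Sum.inl ((_, _), _), Sum.inl ((_, _), _) => by simp [BRel, qB, qk_eq, and_assoc]
  | Sum.inr _, Sum.inr _ => by simp [BRel, qB]
  | Sum.inl ((_, _), _), Sum.inr _ => by simp [BRel, qB]
  | Sum.inr _, Sum.inl ((_, _), _) => by simp [BRel, qB]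

theorem qk_node {l g : Bool} {k : Multi d} {v : Bool} {bs : List (Branch d)}
    {l' g' : Bool} {k' : Multi d} {v' : Bool} {bs' : List (Branch d)} :
    qk (.node l g k v bs) = qk (.node l' g' k' v' bs') ↔
      l = l' ∧ g = g' ∧ k = k' ∧ v = v' ∧
        ∃ e : Fin bs.length ≃ Fin bs'.length,
          ∀ i : Fin bs.length, qB (bs.get i) = qB (bs'.get (e i)) := by
  rw [qk_eq, TEquiv_node]; simp only [BRel_iff]

/-- contribution of a branch -/
def bS : Branch d → ℕ
  | Sum.inl (_, t) => Sfac t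
  | Sum.inr _ => 1

theorem SfacN_fuel : ∀ (n m : ℕ) (t : Tree d), sizeOf t ≤ n → sizeOf t ≤ m →
    SfacN n t = SfacN m t := by
  intro n
  induction n with
  | zero => rintro m ⟨l, g, k, v, bs⟩ h; simp at h
  | succ n ih =>
    rintro m ⟨l, g, k, v, bs⟩ h h'
    cases m with
    | zero => simp at h'
    | succ m =>
      simp only [SfacN]
      congr 2
      apply List.map_congr_left
      rintro (⟨pa, t⟩ | x) hb
      · have := sizeOf_sub (l := l) (g := g) (k := k) (v := v) hb
        exact ih m t (by omega) (by omega)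
      · rfl

theorem Sfac_node {l g : Bool} {k : Multi d} {v : Bool} {bs : List (Branch d)} :
    Sfac (.node l g k v bs) = mfact k *
        Nat.card {e : Equiv.Perm (Fin bs.length) // ∀ i, qB (bs.get (e i)) = qB (bs.get i)} *
        (bs.map bS).prod := by
  rw [Sfac, SfacN_fuel _ (sizeOf (Tree.node l g k v bs) + 1) _ le_rfl (Nat.le_succ _)]
  simp only [SfacN, BRel_iff]
  congr 2
  apply List.map_congr_left
  rintro (⟨pa, t⟩ | x) hb
  · have := sizeOf_sub (l := l) (g := g) (k := k) (v := v) hb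
    exact SfacN_fuel _ _ t (by omega) le_rfl
  · rfl

theorem Sfac_ofFn {l g : Bool} {k : Multi d} {v : Bool} {n : ℕ} (f : Fin n → Branch d) :
    Sfac (.node l g k v (List.ofFn f)) = mfact k *
        Nat.card {e : Equiv.Perm (Fin n) // ∀ i, qB (f (e i)) = qB (f i)} *
        ∏ i, bS (f i) := by
  rw [Sfac_node, List.map_ofFn, List.prod_ofFn]
  have key : ∀ (bs : List (Branch d)) (hn : bs.length = n)
      (_ : ∀ i : Fin n, f i = bs.get (i.cast hn.symm)),
      Nat.card {e : Equiv.Perm (Fin bs.length) // ∀ i, qB (bs.get (e i)) = qB (bs.get i)} =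
      Nat.card {e : Equiv.Perm (Fin n) // ∀ i, qB (f (e i)) = qB (f i)} := by
    intro bs hn hf
    subst hn
    have : f = bs.get := funext hf
    subst this; rfl
  rw [key _ (by simp) (by intro i; simp)]
  rfl

theorem qk_ofFn {l g : Bool} {k : Multi d} {v : Bool} {n : ℕ} {f : Fin n → Branch d}
    {l' g' : Bool} {k' : Multi d} {v' : Bool} {n' : ℕ} {f' : Fin n' → Branch d} :
    qk (.node l g k v (List.ofFn f)) = qk (.node l' g' k' v' (List.ofFn f')) ↔
      l = l' ∧ g = g' ∧ k = k' ∧ v = v' ∧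
        ∃ e : Fin n ≃ Fin n', ∀ i, qB (f i) = qB (f' (e i)) := by
  rw [qk_node]
  have key : ∀ (bs bs' : List (Branch d)) (hn : bs.length = n) (hn' : bs'.length = n')
      (_ : ∀ i : Fin n, f i = bs.get (i.cast hn.symm))
      (_ : ∀ i : Fin n', f' i = bs'.get (i.cast hn'.symm)),
      (∃ e : Fin bs.length ≃ Fin bs'.length,
          ∀ i : Fin bs.length, qB (bs.get i) = qB (bs'.get (e i))) ↔
      ∃ e : Fin n ≃ Fin n', ∀ i, qB (f i) = qB (f' (e i)) := by
    intro bs bs' hn hn' hf hf'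
    subst hn hn'
    have : f = bs.get := funext hf
    subst this
    have : f' = bs'.get := funext hf'
    subst this; rfl
  rw [key _ _ (by simp) (by simp) (by intro i; simp) (by intro i; simp)]

theorem Sfac_congr : ∀ (n : ℕ) (t t' : Tree d), TEquivN n t t' → Sfac t = Sfac t'
  | 0, _, _, h => h.elim
  | n+1, .node l g k v bs, .node _ _ _ _ bs', ⟨h1, h2, h3, h4, e, he⟩ => by
    subst h1 h2 h3 h4
    have hS : ∀ b b' : Branch d, BRel (TEquivN n) b b' → bS b = bS b' := by
      rintro (⟨⟨p, a⟩, t⟩ | x) (⟨⟨p', a'⟩, t'⟩ | x') h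
      · exact Sfac_congr n _ _ h.2.2
      · exact h.elim
      · exact h.elim
      · rfl
    have hq : ∀ i, qB (bs.get i) = qB (bs'.get (e i)) := fun i =>
      (BRel_iff _ _).1 (BRel.mono' (fun _ _ h => ⟨n, h⟩) _ _ (he i))
    rw [← List.ofFn_get bs, ← List.ofFn_get bs', Sfac_ofFn, Sfac_ofFn]
    congr 1
    · congr 1
      refine Nat.card_congr (Equiv.subtypeEquiv (e.permCongr) ?_)
      intro σ
      constructor
      · intro h i
        have := h (e.symm i)
        rw [hq, hq] at this
        simpa using this
      · intro h i
        have := h (e i)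
        rw [hq, hq]
        simpa using this
    · rw [← Equiv.prod_comp e]
      exact Finset.prod_congr rfl fun i _ => hS _ _ (he i)

theorem SQ_qk (t : Tree d) : SQ (qk t) = Sfac t := by
  obtain ⟨n, h⟩ := qk_eq.1 (qk_qout (qk t))
  exact Sfac_congr n _ _ h

theorem mfact_pos (k : Multi d) : 0 < mfact k := Finset.prod_pos fun _ _ => Nat.factorial_pos _

theorem nodeSer_ofFn {l g : Bool} {k : Multi d} {v : Bool} {n : ℕ} (a : Fin n → Multi d)
    (M : Fin n → Ser d) (x : QTree d) :
    nodeSer l g k v (List.ofFn fun i => BSpec.ser false (a i) (M i)) x =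
      ∑ᶠ c : Fin n → QTree d, (∏ i, M i (c i)) *
        dqT (.node l g k v (List.ofFn fun i => Sum.inl ((false, a i), qout (c i)))) x := by
  have hinj : Function.Injective (List.ofFn : (Fin n → QTree d) → List (QTree d)) :=
    List.ofFn_injective
  have h1 : ∀ c : Fin n → QTree d,
      List.zipWith BSpec.coeff (List.ofFn fun i => BSpec.ser false (a i) (M i)) (List.ofFn c)
       = List.ofFn fun i => M i (c i) := by
    intro c
    apply List.ext_getElem
    · simp
    · intro i h h'; simp [BSpec.coeff]
  have h2 : ∀ c : Fin n → QTree d,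
      List.zipWith BSpec.toBranch (List.ofFn fun i => BSpec.ser false (a i) (M i)) (List.ofFn c)
       = List.ofFn fun i => (Sum.inl ((false, a i), qout (c i)) : Branch d) := by
    intro c
    apply List.ext_getElem
    · simp
    · intro i h h'; simp [BSpec.toBranch]
  unfold nodeSer
  rw [← finsum_mem_univ, ← finsum_mem_inter_support_eq (s := Set.range List.ofFn) (t := Set.univ)]
  · rw [finsum_mem_range hinj]
    refine finsum_congr fun c => ?_
    rw [h1, h2, List.prod_ofFn]
    simp
  · ext cs
    simp only [Set.mem_inter_iff, Set.mem_univ, true_and, and_iff_right_iff_imp]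
    intro hcs
    rw [Function.mem_support] at hcs
    have hl : cs.length = n := by
      by_contra hne
      exact hcs (by simp [hne])
    subst hl
    exact ⟨cs.get, List.ofFn_get cs⟩

theorem T0_T0g : ∀ (n : ℕ) (t : Tree d), ShapeN false false false n t → ShapeN false true false n t
  | 0, _, h => h.elim
  | n+1, .node _ _ _ _ _, ⟨_, h2, h3⟩ => by
    refine ⟨Or.inl rfl, h2, fun b hb => ?_⟩
    rcases h3 b hb with ⟨p, a, t, h, h', h''⟩ | ⟨h, _⟩
    · exact Or.inl ⟨p, a, t, h, h', T0_T0g n t h''⟩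
    · cases h

theorem T0_form {n : ℕ} {t : Tree d} (h : ShapeN false false false (n+1) t) :
    ∃ (l v : Bool) (m : ℕ) (a : Fin m → Multi d) (s : Fin m → Tree d),
      t = .node l false 0 v (List.ofFn fun i => Sum.inl ((false, a i), s i)) ∧
      ∀ i, ShapeN false false false n (s i) := by
  obtain ⟨l, g, k, v, bs⟩ := t
  obtain ⟨h1, h2, h3⟩ := h
  have hg : g = false := by simpa using h1
  have hk : k = 0 := by simpa using h2
  subst hg hk
  have : ∀ i : Fin bs.length, ∃ (a : Multi d) (s : Tree d),
      bs.get i = Sum.inl ((false, a), s) ∧ ShapeN false false false n s := by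
    intro i
    rcases h3 _ (List.get_mem bs i) with ⟨p, a, t, h, h', h''⟩ | ⟨h, _⟩
    · have hp : p = false := by simpa using h'
      subst hp
      exact ⟨a, t, h, h''⟩
    · cases h
  choose a s hs hs' using this
  refine ⟨l, v, bs.length, a, s, ?_, hs'⟩
  congr 1
  conv_lhs => rw [← List.ofFn_get bs]
  congr 1
  exact funext hs

theorem Mloc_form {Mloc : QTree d → Ser d} (hM : MlocEqs Mloc) {l v : Bool} {m : ℕ}
    {a : Fin m → Multi d} {s : Fin m → Tree d}
    (h : IsT0 (.node l false 0 v (List.ofFn fun i => Sum.inl ((false, a i), s i)))) (x : QTree d) :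
    Mloc (qk (.node l false 0 v (List.ofFn fun i => Sum.inl ((false, a i), s i)))) x =
      ∑ᶠ k : Multi d, (1 / (mfact k : ℝ)) * ∑ᶠ c : Fin m → QTree d,
        (∏ i, Mloc (qk (s i)) (c i)) *
        dqT (.node l false k v (List.ofFn fun i => Sum.inl ((false, a i), qout (c i)))) x := by
  have hg : IsT0g (.node l false 0 v (List.ofFn fun i => Sum.inl ((false, a i), s i))) := by
    obtain ⟨n, h⟩ := h
    exact ⟨n, T0_T0g n _ h⟩
  rw [hM _ _ _ _ hg]
  refine finsum_congr fun k => ?_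
  rw [← nodeSer_ofFn, List.map_ofFn]
  rfl

theorem exists_ne_zero_of_finsum_ne_zero' {α : Type*} {f : α → ℝ} (h : ∑ᶠ i, f i ≠ 0) :
    ∃ i, f i ≠ 0 := by
  by_contra! hf
  exact h (by simp [hf])

theorem Mloc_supp {Mloc : QTree d → Ser d} (hM : MlocEqs Mloc) {l v : Bool} {m : ℕ}
    {a : Fin m → Multi d} {s : Fin m → Tree d}
    (h : IsT0 (.node l false 0 v (List.ofFn fun i => Sum.inl ((false, a i), s i)))) {x : QTree d}
    (hx : Mloc (qk (.node l false 0 v (List.ofFn fun i => Sum.inl ((false, a i), s i)))) x ≠ 0) :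
    ∃ (k : Multi d) (c : Fin m → QTree d), (∀ i, Mloc (qk (s i)) (c i) ≠ 0) ∧
      x = qk (.node l false k v (List.ofFn fun i => Sum.inl ((false, a i), qout (c i)))) := by
  rw [Mloc_form hM h] at hx
  obtain ⟨k, hk⟩ := exists_ne_zero_of_finsum_ne_zero' hx
  obtain ⟨c, hc⟩ := exists_ne_zero_of_finsum_ne_zero' (right_ne_zero_of_mul hk)
  refine ⟨k, c, fun i => Finset.prod_ne_zero_iff.1 (left_ne_zero_of_mul hc) i (Finset.mem_univ i),
    ?_⟩
  by_contra hne
  exact right_ne_zero_of_mul hc (by simp [dqT, hne])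

theorem supp_unique {Mloc : QTree d → Ser d} (hM : MlocEqs Mloc) : ∀ (n : ℕ) (t t' : Tree d),
    ShapeN false false false n t → ShapeN false false false n t' → ∀ x,
    Mloc (qk t) x ≠ 0 → Mloc (qk t') x ≠ 0 → qk t = qk t' := by
  intro n
  induction n with
  | zero => intro t t' h; exact h.elim
  | succ n ih =>
    intro t t' ht ht' x hx hx'
    have h0 : IsT0 t := ⟨_, ht⟩
    have h0' : IsT0 t' := ⟨_, ht'⟩
    obtain ⟨l, v, m, a, s, rfl, hs⟩ := T0_form ht
    obtain ⟨l', v', m', a', s', rfl, hs'⟩ := T0_form ht'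
    obtain ⟨k, c, hc, rfl⟩ := Mloc_supp hM h0 hx
    obtain ⟨k', c', hc', heq⟩ := Mloc_supp hM h0' hx'
    obtain ⟨h1, -, -, h4, e, he⟩ := qk_ofFn.1 heq
    refine qk_ofFn.2 ⟨h1, rfl, rfl, h4, e, fun i => ?_⟩
    have := he i
    simp only [qB, qk_qout, Sum.inl.injEq, Prod.mk.injEq, true_and] at this ⊢
    exact ⟨this.1, ih _ _ (hs i) (hs' _) (c i) (hc i) (this.2 ▸ hc' (e i))⟩

theorem orbit_count {m : ℕ} {α : Type*} (G : Finset (Equiv.Perm (Fin m)))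
    (hmul : ∀ σ ∈ G, ∀ τ ∈ G, σ * τ ∈ G) (hinv : ∀ σ ∈ G, σ⁻¹ ∈ G) (c : Fin m → α) :
    (G.image fun σ : Equiv.Perm (Fin m) => c ∘ σ).card *
      (G.filter fun σ : Equiv.Perm (Fin m) => c ∘ σ = c).card = G.card := by
  rw [Finset.card_eq_sum_card_image (fun σ : Equiv.Perm (Fin m) => c ∘ σ) G, ← smul_eq_mul,
    ← Finset.sum_const]
  refine Finset.sum_congr rfl fun x hx => ?_
  obtain ⟨τ, hτ, rfl⟩ := Finset.mem_image.1 hx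
  refine Finset.card_bij (fun σ _ => σ * τ) ?_ ?_ ?_
  · intro σ hσ
    rw [Finset.mem_filter] at hσ ⊢
    refine ⟨hmul _ hσ.1 _ hτ, ?_⟩
    conv_rhs => rw [← hσ.2]
    rfl
  · intro σ _ σ' _ h
    exact mul_right_cancel h
  · intro σ hσ
    rw [Finset.mem_filter] at hσ
    refine ⟨σ * τ⁻¹, ?_, by simp⟩
    rw [Finset.mem_filter]
    refine ⟨hmul _ hσ.1 _ (hinv _ hτ), ?_⟩
    funext i
    have := congrFun hσ.2 (τ⁻¹ i)
    simpa using this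

theorem main_aux {Mloc : QTree d → Ser d} (hM : MlocEqs Mloc) : ∀ (n : ℕ) (t : Tree d),
    ShapeN false false false n t → ∀ x, Mloc (qk t) x ≠ 0 →
      Mloc (qk t) x * (SQ x : ℝ) = (Sfac t : ℝ) := by
  intro n
  induction n with
  | zero => intro t h; exact h.elim
  | succ n ih =>
    intro t ht x hx
    have h0 : IsT0 t := ⟨_, ht⟩
    obtain ⟨l, v, m, a, s, rfl, hs⟩ := T0_form ht
    obtain ⟨k, c, hc, rfl⟩ := Mloc_supp hM h0 hx
    let G : Finset (Equiv.Perm (Fin m)) :=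
      Finset.univ.filter fun σ => ∀ i, a (σ i) = a i ∧ qk (s (σ i)) = qk (s i)
    have hG : ∀ σ, σ ∈ G ↔ ∀ i, a (σ i) = a i ∧ qk (s (σ i)) = qk (s i) := by
      intro σ; simp [G]
    have hmul : ∀ σ ∈ G, ∀ τ ∈ G, σ * τ ∈ G := by
      intro σ hσ τ hτ
      rw [hG] at *
      intro i
      rw [Equiv.Perm.mul_apply]
      exact ⟨(hσ _).1.trans (hτ i).1, (hσ _).2.trans (hτ i).2⟩
    have hinv : ∀ σ ∈ G, σ⁻¹ ∈ G := by
      intro σ hσ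
      rw [hG] at *
      intro i
      have := hσ (σ⁻¹ i)
      rw [show σ (σ⁻¹ i) = i by simp] at this
      exact ⟨this.1.symm, this.2.symm⟩
    -- value of Mloc
    have hval : Mloc (qk (.node l false 0 v (List.ofFn fun i => Sum.inl ((false, a i), s i))))
        (qk (.node l false k v (List.ofFn fun i => Sum.inl ((false, a i), qout (c i))))) =
        (1 / (mfact k : ℝ)) * ((G.image fun σ : Equiv.Perm (Fin m) => c ∘ σ).card *
          ∏ i, Mloc (qk (s i)) (c i)) := by
      rw [Mloc_form hM h0, finsum_eq_single _ k]
      · congr 1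
        have hterm : ∀ c' : Fin m → QTree d, (∏ i, Mloc (qk (s i)) (c' i)) *
            dqT (.node l false k v (List.ofFn fun i => Sum.inl ((false, a i), qout (c' i))))
            (qk (.node l false k v (List.ofFn fun i => Sum.inl ((false, a i), qout (c i))))) ≠ 0 →
            c' ∈ G.image fun σ : Equiv.Perm (Fin m) => c ∘ σ := by
          intro c' h
          have h1 := fun i =>
            Finset.prod_ne_zero_iff.1 (left_ne_zero_of_mul h) i (Finset.mem_univ i)
          have h2 := right_ne_zero_of_mul h
          have h3 : qk (.node l false k v (List.ofFn fun i => Sum.inl ((false, a i), qout (c i)))) =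
            qk (.node l false k v (List.ofFn fun i => Sum.inl ((false, a i), qout (c' i)))) := by
            by_contra hne
            exact h2 (by simp [dqT, hne])
          obtain ⟨-, -, -, -, e, he⟩ := qk_ofFn.1 h3.symm
          simp only [qB, qk_qout, Sum.inl.injEq, Prod.mk.injEq, true_and] at he
          refine Finset.mem_image.2 ⟨e, ?_, ?_⟩
          · rw [hG]
            intro i
            refine ⟨(he i).1.symm, supp_unique hM n _ _ (hs _) (hs _) (c (e i)) (hc _) ?_⟩
            rw [← (he i).2]; exact h1 i
          · funext i; exact (he i).2.symm
        rw [finsum_eq_sum_of_support_subset (s := G.image fun σ : Equiv.Perm (Fin m) => c ∘ σ) _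
          (fun c' h => hterm c' h), ← nsmul_eq_mul, ← Finset.sum_const]
        refine Finset.sum_congr rfl fun c' hc' => ?_
        obtain ⟨σ, hσ, rfl⟩ := Finset.mem_image.1 hc'
        rw [hG] at hσ
        have h3 : qk (.node l false k v (List.ofFn fun i => Sum.inl ((false, a i), qout (c i)))) =
            qk (.node l false k v
              (List.ofFn fun i => Sum.inl ((false, a i), qout ((c ∘ σ) i)))) := by
          symm
          refine qk_ofFn.2 ⟨rfl, rfl, rfl, rfl, σ, fun i => ?_⟩
          simp [qB, qk_qout, (hσ i).1]
        rw [dqT, if_pos h3, mul_one, ← Equiv.prod_comp σ (fun i => Mloc (qk (s i)) (c i))]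
        refine Finset.prod_congr rfl fun i _ => ?_
        rw [(hσ i).2]; rfl
      · intro k' hk'
        apply mul_eq_zero_of_right
        rw [← finsum_zero (α := Fin m → QTree d)]
        refine finsum_congr fun c' => ?_
        apply mul_eq_zero_of_right
        rw [dqT, if_neg]
        intro h
        exact hk' (qk_ofFn.1 h).2.2.1.symm
    have hSt : Sfac (.node l false 0 v (List.ofFn fun i => Sum.inl ((false, a i), s i)))
        = G.card * ∏ i, Sfac (s i) := by
      rw [Sfac_ofFn]
      have : mfact (0 : Multi d) = 1 := by simp [mfact]
      rw [this, one_mul, Nat.card_eq_fintype_card, Fintype.card_subtype]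
      congr 2
      ext σ
      simp [hG, qB]
    have hSx : SQ (qk (.node l false k v (List.ofFn fun i => Sum.inl ((false, a i), qout (c i)))))
        = mfact k * (G.filter fun σ : Equiv.Perm (Fin m) => c ∘ σ = c).card * ∏ i, SQ (c i) := by
      rw [SQ_qk, Sfac_ofFn]
      rw [Nat.card_eq_fintype_card, Fintype.card_subtype]
      congr 3
      ext σ
      simp only [Finset.mem_filter, Finset.mem_univ, true_and, hG, qB, qk_qout, Sum.inl.injEq,
        Prod.mk.injEq, funext_iff, Function.comp_apply, ← forall_and]
      refine forall_congr' fun i => ?_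
      refine ⟨fun h => ⟨⟨h.1, ?_⟩, h.2⟩, fun h => ⟨h.1.1, h.2⟩⟩
      refine supp_unique hM n _ _ (hs _) (hs _) (c (σ i)) (hc _) ?_
      rw [h.2]; exact hc i
    have hprod : (∏ i, Mloc (qk (s i)) (c i)) * (∏ i, (SQ (c i) : ℝ)) = ∏ i, (Sfac (s i) : ℝ) := by
      rw [← Finset.prod_mul_distrib]
      exact Finset.prod_congr rfl fun i _ => ih _ (hs i) _ (hc i)
    have hk : (mfact k : ℝ) ≠ 0 := by exact_mod_cast (mfact_pos k).ne'
    rw [hval, hSt, hSx, ← orbit_count G hmul hinv c]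
    push_cast
    rw [← hprod]
    field_simp

end aux


/-- For every `τ ∈ T_0`, writing `M_loc τ = Σ_i a_i τ_i`
with pairwise distinct decorated trees `τ_i ∈ T_0^X` and coefficients `a_i`,
one has `M_loc τ / S(τ) = Σ_i τ_i / S(τ_i)`; equivalently,
`a_i · S(τ_i) = S(τ)` for every `i`.  Here the coefficient `a_i` of the
(non-planar) tree `c` in `M_loc τ` is `Mloc (qk τ) c`. -/
theorem localisation_symmetry_factors {d : ℕ}
    (Mloc : QTree d → Ser d) (hMloc : MlocEqs Mloc) :
    ∀ t : Tree d, Tree.IsT0 t → ∀ c : QTree d, Mloc (qk t) c ≠ 0 →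
      Mloc (qk t) c * (SQ c : ℝ) = (Tree.Sfac t : ℝ) := by
  rintro t ⟨n, h⟩ c hc
  exact main_aux hMloc n t h c hc

end Flow
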